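/- arXiv:0707.1400 — 2 statements merged into one kernel-verified Lean document; each statement's English description precedes it below -/
import Mathlib

section
/- Let n ≥ 3, b > 0, 0 ≤ ε < 2/(n−2), N = 2n/(n−2), and let B be the open unit ball of ℝⁿ. Let V be continuous on B̄ with 0 ≤ V(x) ≤ b, and let u ∈ C²(B) ∩ C⁰(B̄) satisfy u > 0 in B, u = 0 on ∂B and −∑ᵢ ∂²u/∂xᵢ² = V u^{N−1−ε} in B. If x₀ ∈ B is a point where u attains its maximum over B̄, then [u(x₀)]^{4/(n−2)−ε} · dist(x₀, ∂B) ≥ n/b, where dist(x₀, ∂B) = 1 − |x₀|. -/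
open MeasureTheory Metric Real

/-- The Euclidean Laplacian `∑ i, ∂²u/∂xᵢ²` (without sign). -/
noncomputable def lapl {n : ℕ} (u : EuclideanSpace ℝ (Fin n) → ℝ)
    (x : EuclideanSpace ℝ (Fin n)) : ℝ :=
  ∑ i : Fin n,
    fderiv ℝ (fun y => fderiv ℝ u y (EuclideanSpace.single i 1)) x (EuclideanSpace.single i 1)

/-!
If `-Δ u ≤ b u ^ p` and `M = max u`, then `-Δ u ≤ b M ^ p`, so on the ball of radius `r` about `a`
in dimension `d` the maximum principle bounds `u` by the solution `b M ^ p (r² - |x - a|²) / (2d)`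
of the Dirichlet problem with constant right-hand side `b M ^ p`. At a maximum point `u` equals `M`,
and dividing by `M` gives the estimate.
-/

open Laplacian InnerProductSpace Module Topology

section SecondDerivative

variable {E F : Type*} [NormedAddCommGroup E] [NormedSpace ℝ E]
  [NormedAddCommGroup F] [NormedSpace ℝ F]

theorem deriv_deriv_nonpos_of_isLocalMax {f : ℝ → ℝ} {x : ℝ} (hf : ContinuousAt f x)
    (hmax : IsLocalMax f x) : deriv (deriv f) x ≤ 0 := by
  by_contra! hpos
  have hmin : IsLocalMin f x := isLocalMin_of_deriv_deriv_pos hpos hmax.deriv_eq_zero hf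
  have hconst : f =ᶠ[𝓝 x] fun _ ↦ f x := by
    filter_upwards [hmax, hmin] with t hle hge using le_antisymm hle hge
  have hzero : deriv (deriv f) x = 0 := by simpa using hconst.deriv.deriv_eq
  exact hpos.ne' hzero

theorem deriv_deriv_comp_add_smul {u : E → F} {x : E} (hu : ContDiffAt ℝ 2 u x) (e : E) :
    deriv (deriv fun t : ℝ ↦ u (x + t • e)) 0 = fderiv ℝ (fderiv ℝ u) x e e := by
  have hline (t : ℝ) : HasDerivAt (fun t : ℝ ↦ x + t • e) e t := by
    simpa using ((hasDerivAt_id t).smul_const e).const_add x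
  have hline_tendsto : Filter.Tendsto (fun t : ℝ ↦ x + t • e) (𝓝 0) (𝓝 x) := by
    simpa using (hline 0).continuousAt.tendsto
  have hfirst : (deriv fun t : ℝ ↦ u (x + t • e)) =ᶠ[𝓝 0] fun t ↦ fderiv ℝ u (x + t • e) e := by
    filter_upwards [hline_tendsto.eventually (hu.eventually (by simp))] with t ht
    exact ((ht.differentiableAt two_ne_zero).hasFDerivAt.comp_hasDerivAt t (hline t)).deriv
  have hfderiv : DifferentiableAt ℝ (fderiv ℝ u) x :=
    (hu.fderiv_right (m := 1) (by norm_num)).differentiableAt one_ne_zero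
  have hsecond : HasFDerivAt (fun y ↦ fderiv ℝ u y e) ((fderiv ℝ (fderiv ℝ u) x).flip e) x := by
    simpa using hfderiv.hasFDerivAt.clm_apply (hasFDerivAt_const e x)
  rw [hfirst.deriv_eq]
  exact (hsecond.comp_hasDerivAt_of_eq 0 (hline 0) (by simp)).deriv

theorem fderiv_fderiv_nonpos_of_isLocalMax {u : E → ℝ} {x : E} (hu : ContDiffAt ℝ 2 u x)
    (hmax : IsLocalMax u x) (e : E) : fderiv ℝ (fderiv ℝ u) x e e ≤ 0 := by
  have hline : ContinuousAt (fun t : ℝ ↦ x + t • e) 0 := by fun_prop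
  rw [← deriv_deriv_comp_add_smul hu]
  refine deriv_deriv_nonpos_of_isLocalMax ?_ ?_
  · exact hu.continuousAt.comp_of_eq hline (by simp)
  · exact IsLocalMax.comp_continuous (g := fun t : ℝ ↦ x + t • e) (by simpa using hmax) hline

end SecondDerivative

section Laplacian

variable {E : Type*} [NormedAddCommGroup E] [InnerProductSpace ℝ E]

theorem contDiff_const_mul_norm_sub_sq {k : WithTop ℕ∞} (c : ℝ) (a : E) :
    ContDiff ℝ k fun y ↦ c * ‖y - a‖ ^ 2 :=
  contDiff_const.mul ((contDiff_id.sub contDiff_const).norm_sq ℝ)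

theorem fderiv_fderiv_norm_sub_sq_apply (a x v w : E) :
    fderiv ℝ (fderiv ℝ fun y ↦ ‖y - a‖ ^ 2) x v w = 2 * inner ℝ v w := by
  have hfirst : fderiv ℝ (fun y ↦ ‖y - a‖ ^ 2) = fun y ↦ (2 • innerSL ℝ (E := E)) (y - a) := by
    ext1 y
    rw [fderiv_comp_sub (f := fun y ↦ ‖y‖ ^ 2), fderiv_norm_sq_apply]
    rfl
  have hsecond : HasFDerivAt (fun y ↦ (2 • innerSL ℝ (E := E)) (y - a)) (2 • innerSL ℝ) x :=
    (2 • innerSL ℝ (E := E)).hasFDerivAt.comp x ((hasFDerivAt_id x).sub_const a)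
  rw [hfirst, hsecond.fderiv, two_mul, two_smul]
  rfl

variable [FiniteDimensional ℝ E]

theorem laplacian_nonpos_of_isLocalMax {u : E → ℝ} {x : E} (hu : ContDiffAt ℝ 2 u x)
    (hmax : IsLocalMax u x) : Δ u x ≤ 0 := by
  simp only [laplacian_eq_iteratedFDeriv_stdOrthonormalBasis, iteratedFDeriv_two_apply]
  exact Finset.sum_nonpos fun i _ ↦ fderiv_fderiv_nonpos_of_isLocalMax hu hmax _

theorem laplacian_norm_sub_sq (a x : E) :
    Δ (fun y ↦ ‖y - a‖ ^ 2) x = 2 * finrank ℝ E := by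
  simp only [laplacian_eq_iteratedFDeriv_stdOrthonormalBasis, iteratedFDeriv_two_apply]
  simp [fderiv_fderiv_norm_sub_sq_apply, mul_comm]

theorem laplacian_add_const_mul_norm_sub_sq {u : E → ℝ} {x : E} (hu : ContDiffAt ℝ 2 u x)
    (c : ℝ) (a : E) :
    Δ (fun y ↦ u y + c * ‖y - a‖ ^ 2) x = Δ u x + c * (2 * finrank ℝ E) := by
  have hsq : ContDiffAt ℝ 2 (fun y : E ↦ ‖y - a‖ ^ 2) x := by
    simpa using (contDiff_const_mul_norm_sub_sq 1 a).contDiffAt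
  rw [← laplacian_norm_sub_sq a x, ← smul_eq_mul, ← laplacian_smul c hsq]
  exact hu.laplacian_add (hsq.const_smul c)

theorem le_of_forall_frontier_le_of_laplacian_pos {u : E → ℝ} {Ω : Set E} {m : ℝ}
    (hΩ : IsOpen Ω) (hbdd : Bornology.IsBounded Ω) (hu : ContDiffOn ℝ 2 u Ω)
    (huc : ContinuousOn u (closure Ω)) (hpos : ∀ x ∈ Ω, 0 < Δ u x)
    (hm : ∀ x ∈ frontier Ω, u x ≤ m) {x : E} (hx : x ∈ Ω) : u x ≤ m := by
  obtain ⟨z, hz, hzmax⟩ :=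
    hbdd.isCompact_closure.exists_isMaxOn ⟨x, subset_closure hx⟩ huc
  have hzΩ : z ∉ Ω := fun hzΩ ↦ by
    have hnhds : Ω ∈ 𝓝 z := hΩ.mem_nhds hzΩ
    have hlocal : IsLocalMax u z := (hzmax.on_subset subset_closure).isLocalMax hnhds
    exact (hpos z hzΩ).not_ge (laplacian_nonpos_of_isLocalMax (hu.contDiffAt hnhds) hlocal)
  have hzf : z ∈ frontier Ω := by rw [hΩ.frontier_eq]; exact ⟨hz, hzΩ⟩
  exact (hzmax (subset_closure hx)).trans (hm z hzf)

theorem le_of_forall_frontier_le_of_laplacian_nonneg [Nontrivial E] {u : E → ℝ} {Ω : Set E} {m : ℝ}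
    (hΩ : IsOpen Ω) (hbdd : Bornology.IsBounded Ω) (hu : ContDiffOn ℝ 2 u Ω)
    (huc : ContinuousOn u (closure Ω)) (hnonneg : ∀ x ∈ Ω, 0 ≤ Δ u x)
    (hm : ∀ x ∈ frontier Ω, u x ≤ m) {x : E} (hx : x ∈ Ω) : u x ≤ m := by
  obtain ⟨R, hR, hΩR⟩ := hbdd.closure.subset_closedBall_lt 0 x
  refine le_of_forall_pos_le_add fun δ hδ ↦ ?_
  -- Adding `c ‖y - x‖ ^ 2` makes `u` strictly subharmonic and leaves its value at `x` unchanged.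
  set c := δ / R ^ 2 with hc
  have : 0 < c := by positivity
  have hdim : (0 : ℝ) < finrank ℝ E := by exact_mod_cast finrank_pos
  suffices u x + c * ‖x - x‖ ^ 2 ≤ m + δ by simpa using this
  refine le_of_forall_frontier_le_of_laplacian_pos (u := fun y ↦ u y + c * ‖y - x‖ ^ 2)
    hΩ hbdd (hu.add (contDiff_const_mul_norm_sub_sq c x).contDiffOn)
    (huc.add (by fun_prop)) (fun y hy ↦ ?_) (fun y hy ↦ ?_) hx
  · rw [laplacian_add_const_mul_norm_sub_sq (hu.contDiffAt (hΩ.mem_nhds hy))]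
    have := hnonneg y hy
    positivity
  · have hyR : ‖y - x‖ ≤ R := mem_closedBall_iff_norm.mp (hΩR (frontier_subset_closure hy))
    calc u y + c * ‖y - x‖ ^ 2 ≤ m + c * R ^ 2 := by gcongr; exact hm y hy
      _ = m + δ := by rw [hc, div_mul_cancel₀ _ (by positivity)]

theorem le_of_neg_laplacian_le_const [Nontrivial E] {u : E → ℝ} {a : E} {r C : ℝ}
    (hu : ContDiffOn ℝ 2 u (ball a r)) (huc : ContinuousOn u (closedBall a r))
    (hC : ∀ x ∈ ball a r, -Δ u x ≤ C) (hbd : ∀ x ∈ sphere a r, u x ≤ 0)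
    {x : E} (hx : x ∈ ball a r) : u x ≤ C / (2 * finrank ℝ E) * (r ^ 2 - dist x a ^ 2) := by
  have hr : r ≠ 0 := (pos_of_mem_ball hx).ne'
  have hdim : (finrank ℝ E : ℝ) ≠ 0 := by exact_mod_cast finrank_pos.ne'
  set c := C / (2 * finrank ℝ E) with hc
  suffices u x + c * ‖x - a‖ ^ 2 ≤ c * r ^ 2 by rw [dist_eq_norm]; linarith
  refine le_of_forall_frontier_le_of_laplacian_nonneg (u := fun y ↦ u y + c * ‖y - a‖ ^ 2)
    isOpen_ball isBounded_ball (hu.add (contDiff_const_mul_norm_sub_sq c a).contDiffOn) ?_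
    (fun y hy ↦ ?_) (fun y hy ↦ ?_) hx
  · rw [closure_ball a hr]
    exact huc.add (by fun_prop)
  · rw [laplacian_add_const_mul_norm_sub_sq (hu.contDiffAt (isOpen_ball.mem_nhds hy)), hc,
      div_mul_cancel₀ _ (by positivity)]
    linarith [hC y hy]
  · rw [frontier_ball a hr] at hy
    rw [mem_sphere_iff_norm.mp hy]
    linarith [hbd y hy]

theorem two_mul_finrank_le_mul_rpow_mul_of_isMaxOn [Nontrivial E] {u : E → ℝ} {a x₀ : E}
    {r b p : ℝ} (hb : 0 ≤ b) (hp : 0 ≤ p)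
    (hu : ContDiffOn ℝ 2 u (ball a r)) (huc : ContinuousOn u (closedBall a r))
    (hnonneg : ∀ x ∈ ball a r, 0 ≤ u x) (hbd : ∀ x ∈ sphere a r, u x ≤ 0)
    (hsub : ∀ x ∈ ball a r, -Δ u x ≤ b * u x ^ p)
    (hx₀ : x₀ ∈ ball a r) (hpos : 0 < u x₀) (hmax : IsMaxOn u (ball a r) x₀) :
    2 * finrank ℝ E ≤ b * u x₀ ^ (p - 1) * (r ^ 2 - dist x₀ a ^ 2) := by
  have hdim : (0 : ℝ) < 2 * finrank ℝ E := by exact_mod_cast mul_pos two_pos finrank_pos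
  have hconst (x) (hx : x ∈ ball a r) : -Δ u x ≤ b * u x₀ ^ p :=
    (hsub x hx).trans <| by gcongr; exacts [hnonneg x hx, hmax hx]
  have hle : u x₀ ≤ b * u x₀ ^ p / (2 * finrank ℝ E) * (r ^ 2 - dist x₀ a ^ 2) :=
    le_of_neg_laplacian_le_const hu huc hconst hbd hx₀
  rw [div_mul_eq_mul_div, le_div_iff₀ hdim] at hle
  refine le_of_mul_le_mul_left ?_ hpos
  calc u x₀ * (2 * finrank ℝ E) ≤ b * u x₀ ^ p * (r ^ 2 - dist x₀ a ^ 2) := hle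
    _ = u x₀ * (b * u x₀ ^ (p - 1) * (r ^ 2 - dist x₀ a ^ 2)) := by
      rw [rpow_sub_one hpos.ne']; field_simp

theorem max_point_dist_lower_bound_general [Nontrivial E] {u : E → ℝ} {a x₀ : E}
    {r b p : ℝ} (hb : 0 < b) (hp : 0 ≤ p)
    (hu : ContDiffOn ℝ 2 u (ball a r)) (huc : ContinuousOn u (closedBall a r))
    (hnonneg : ∀ x ∈ ball a r, 0 ≤ u x) (hbd : ∀ x ∈ sphere a r, u x ≤ 0)
    (hsub : ∀ x ∈ ball a r, -Δ u x ≤ b * u x ^ p)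
    (hx₀ : x₀ ∈ ball a r) (hpos : 0 < u x₀) (hmax : IsMaxOn u (ball a r) x₀) :
    finrank ℝ E / b ≤ u x₀ ^ (p - 1) * (r * (r - dist x₀ a)) := by
  have hsharp : 2 * finrank ℝ E ≤ b * u x₀ ^ (p - 1) * (r ^ 2 - dist x₀ a ^ 2) :=
    two_mul_finrank_le_mul_rpow_mul_of_isMaxOn hb.le hp hu huc hnonneg hbd hsub hx₀ hpos hmax
  have hdist : r ^ 2 - dist x₀ a ^ 2 ≤ 2 * (r * (r - dist x₀ a)) := by
    linarith [sq_nonneg (r - dist x₀ a)]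
  rw [div_le_iff₀' hb]
  refine le_of_mul_le_mul_left ?_ two_pos
  calc 2 * (finrank ℝ E : ℝ) ≤ b * u x₀ ^ (p - 1) * (r ^ 2 - dist x₀ a ^ 2) := hsharp
    _ ≤ b * u x₀ ^ (p - 1) * (2 * (r * (r - dist x₀ a))) := by gcongr
    _ = 2 * (b * (u x₀ ^ (p - 1) * (r * (r - dist x₀ a)))) := by ring

end Laplacian

theorem lapl_eq_laplacian {n : ℕ} {u : EuclideanSpace ℝ (Fin n) → ℝ} {x : EuclideanSpace ℝ (Fin n)}
    (hu : ContDiffAt ℝ 2 u x) : lapl u x = Δ u x := by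
  have hfderiv : DifferentiableAt ℝ (fderiv ℝ u) x :=
    (hu.fderiv_right (m := 1) (by norm_num)).differentiableAt one_ne_zero
  simp [lapl, laplacian_eq_iteratedFDeriv_orthonormalBasis u (EuclideanSpace.basisFun (Fin n) ℝ),
    iteratedFDeriv_two_apply, fderiv_clm_apply hfderiv]

theorem critical_exponent_sub_two {n : ℝ} (hn : n ≠ 2) : 2 * n / (n - 2) - 2 = 4 / (n - 2) := by
  have : n - 2 ≠ 0 := sub_ne_zero.mpr hn
  field_simp
  ring

/-- if `u` is a positive solution of `Δu = V u^{N−1−ε}` on the unit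
ball `B` of `ℝⁿ`, `n ≥ 3`, vanishing on `∂B`, with `0 ≤ V ≤ b`, and `x₀ ∈ B` is a
maximum point of `u` over `B̄`, then `[u(x₀)]^{4/(n−2)−ε} · (1 − |x₀|) ≥ n/b`. -/
theorem max_point_dist_lower_bound
    (n : ℕ) (hn : 3 ≤ n) (b : ℝ) (hb : 0 < b)
    (ε : ℝ) (hε₀ : 0 ≤ ε) (hε₁ : ε < 2 / ((n : ℝ) - 2))
    (V u : EuclideanSpace ℝ (Fin n) → ℝ)
    (hV : ContinuousOn V (closedBall (0 : EuclideanSpace ℝ (Fin n)) 1))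
    (hVb : ∀ x ∈ closedBall (0 : EuclideanSpace ℝ (Fin n)) 1, 0 ≤ V x ∧ V x ≤ b)
    (hu : ContDiffOn ℝ 2 u (ball (0 : EuclideanSpace ℝ (Fin n)) 1))
    (huc : ContinuousOn u (closedBall (0 : EuclideanSpace ℝ (Fin n)) 1))
    (hupos : ∀ x ∈ ball (0 : EuclideanSpace ℝ (Fin n)) 1, 0 < u x)
    (hubd : ∀ x ∈ sphere (0 : EuclideanSpace ℝ (Fin n)) 1, u x = 0)
    (hpde : ∀ x ∈ ball (0 : EuclideanSpace ℝ (Fin n)) 1,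
      -lapl u x = V x * u x ^ (2 * (n : ℝ) / ((n : ℝ) - 2) - 1 - ε))
    (x₀ : EuclideanSpace ℝ (Fin n)) (hx₀ : x₀ ∈ ball (0 : EuclideanSpace ℝ (Fin n)) 1)
    (hmax : ∀ y ∈ closedBall (0 : EuclideanSpace ℝ (Fin n)) 1, u y ≤ u x₀) :
    (n : ℝ) / b ≤ u x₀ ^ (4 / ((n : ℝ) - 2) - ε) * (1 - ‖x₀‖) := by
  have hn₂ : (2 : ℝ) < n := by exact_mod_cast hn
  have : NeZero n := ⟨by positivity⟩
  have hN : 2 * (n : ℝ) / (n - 2) - 2 = 4 / (n - 2) := critical_exponent_sub_two hn₂.ne'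
  have hexp : 2 * (n : ℝ) / (n - 2) - 1 - ε - 1 = 4 / (n - 2) - ε := by rw [← hN]; ring
  have hp : 0 ≤ 2 * (n : ℝ) / (n - 2) - 1 - ε := by
    have : (2 : ℝ) / (n - 2) ≤ 4 / (n - 2) := by gcongr; norm_num
    linarith
  have hsub (x) (hx : x ∈ ball 0 1) :
      -Δ u x ≤ b * u x ^ (2 * (n : ℝ) / (n - 2) - 1 - ε) := by
    rw [← lapl_eq_laplacian (hu.contDiffAt (isOpen_ball.mem_nhds hx)), hpde x hx]
    have := hupos x hx
    gcongr
    exact (hVb x (ball_subset_closedBall hx)).2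
  simpa [hexp] using max_point_dist_lower_bound_general hb hp hu huc (fun x hx ↦ (hupos x hx).le)
    (fun x hx ↦ (hubd x hx).le) hsub hx₀ (hupos x₀ hx₀)
    (fun y hy ↦ hmax y (ball_subset_closedBall hy))
end

section
/- Let x₀ ∈ ℝⁿ, R > 0, and let u be a positive continuous function on the closed ball B̄(x₀, R). Define s(x) = (R − |x − x₀|)^{1/2} u(x) on B̄(x₀, R), and let a ∈ B̄(x₀, R) be a point where s attains its maximum. Set M = u(a) and l = R − |a − x₀|. Then for every x with |x − a| ≤ l/2 one has u(x) ≤ √2 · M. -/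
open MeasureTheory Metric Real

/-! The function `d y = R - dist y x₀` is `1`-Lipschitz, so within `θ * d a` of the maximum point
`a` of `d ^ p * u` it stays above `(1 - θ) * d a`; there `u` can exceed `u a` by a factor of at most
`(1 - θ)⁻¹ ^ p`, which is `√2` for `p = θ = 1 / 2`. -/

lemma one_sub_mul_le_of_lipschitzWith_one {X : Type*} [PseudoMetricSpace X] {d : X → ℝ}
    (hd : LipschitzWith 1 d) {a x : X} {θ : ℝ} (hx : dist x a ≤ θ * d a) :
    (1 - θ) * d a ≤ d x := by
  have hax : d a ≤ d x + dist x a := by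
    simpa only [NNReal.coe_one, one_mul, dist_comm a x] using hd.le_add_mul a x
  linarith

lemma le_inv_rpow_mul_of_rpow_mul_le {α β c p y M : ℝ} (hα : 0 < α) (hc : 0 < c) (hp : 0 ≤ p)
    (hM : 0 ≤ M) (hαβ : c * α ≤ β) (h : β ^ p * y ≤ α ^ p * M) : y ≤ c⁻¹ ^ p * M := by
  rcases le_total y 0 with hy | hy
  · exact hy.trans (by positivity)
  have hmul : α ^ p * (c ^ p * y) ≤ α ^ p * M :=
    calc α ^ p * (c ^ p * y) = (c * α) ^ p * y := by rw [mul_rpow hc.le hα.le]; ring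
      _ ≤ β ^ p * y := by gcongr
      _ ≤ α ^ p * M := h
  have hle : c ^ p * y ≤ M := le_of_mul_le_mul_left hmul (rpow_pos_of_pos hα p)
  rwa [inv_rpow hc.le, le_inv_mul_iff₀ (rpow_pos_of_pos hc p)]

theorem le_inv_rpow_mul_of_isMaxOn_rpow_mul {X : Type*} [MetricSpace X] {d u : X → ℝ}
    (hd : LipschitzWith 1 d) {a x : X} {p θ : ℝ} (hp : 0 ≤ p) (hθ₀ : 0 ≤ θ) (hθ₁ : θ < 1)
    (hua : 0 ≤ u a) (hmax : IsMaxOn (fun y ↦ d y ^ p * u y) {y | 0 < d y} a)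
    (hx : dist x a ≤ θ * d a) : u x ≤ (1 - θ)⁻¹ ^ p * u a := by
  have hc : 0 < 1 - θ := sub_pos.mpr hθ₁
  rcases eq_or_ne x a with rfl | hxa
  · have hone : 1 ≤ (1 - θ)⁻¹ ^ p :=
      one_le_rpow ((one_le_inv₀ hc).mpr (sub_le_self 1 hθ₀)) hp
    exact le_mul_of_one_le_left hua hone
  have hda : 0 < d a := pos_of_mul_pos_right ((dist_pos.mpr hxa).trans_le hx) hθ₀
  have hdx : (1 - θ) * d a ≤ d x := one_sub_mul_le_of_lipschitzWith_one hd hx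
  have hx_pos : 0 < d x := (mul_pos hc hda).trans_le hdx
  exact le_inv_rpow_mul_of_rpow_mul_le hda hc hp hua hdx (hmax hx_pos)

theorem blowup_point_selection_general {X : Type*} [MetricSpace X] {x₀ a x : X} {R p θ : ℝ}
    {u : X → ℝ} (hp : 0 ≤ p) (hθ₀ : 0 ≤ θ) (hθ₁ : θ < 1) (hua : 0 ≤ u a)
    (hmax : IsMaxOn (fun y ↦ (R - dist y x₀) ^ p * u y) (closedBall x₀ R) a)
    (hx : dist x a ≤ θ * (R - dist a x₀)) : u x ≤ (1 - θ)⁻¹ ^ p * u a := by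
  have hd : LipschitzWith 1 fun y ↦ R - dist y x₀ := by
    simpa only [zero_add] using (LipschitzWith.const R).sub (LipschitzWith.dist_left x₀)
  have hsub : {y | 0 < R - dist y x₀} ⊆ closedBall x₀ R :=
    fun y hy ↦ mem_closedBall.mpr (sub_pos.mp hy).le
  exact le_inv_rpow_mul_of_isMaxOn_rpow_mul hd hp hθ₀ hθ₁ hua (hmax.on_subset hsub) hx

/-- blow-up point selection. If `u > 0` is continuous on the closed
ball `B̄(x₀, R)`, `s(x) = (R − |x − x₀|)^{1/2} u(x)` attains its maximum over
`B̄(x₀, R)` at `a`, `M = u(a)` and `l = R − |a − x₀|`, then `u(x) ≤ √2 · M`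
whenever `|x − a| ≤ l/2`. -/
theorem blowup_point_selection
    {n : ℕ} (x₀ : EuclideanSpace ℝ (Fin n)) (R : ℝ) (hR : 0 < R)
    (u : EuclideanSpace ℝ (Fin n) → ℝ)
    (hu : ContinuousOn u (closedBall x₀ R))
    (hupos : ∀ x ∈ closedBall x₀ R, 0 < u x)
    (a : EuclideanSpace ℝ (Fin n)) (ha : a ∈ closedBall x₀ R)
    (hmax : ∀ x ∈ closedBall x₀ R,
      Real.sqrt (R - ‖x - x₀‖) * u x ≤ Real.sqrt (R - ‖a - x₀‖) * u a) :
    ∀ x : EuclideanSpace ℝ (Fin n), ‖x - a‖ ≤ (R - ‖a - x₀‖) / 2 →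
      u x ≤ Real.sqrt 2 * u a := by
  simp only [← dist_eq_norm, sqrt_eq_rpow, div_eq_inv_mul _ (2 : ℝ)] at hmax ⊢
  intro x hx
  have hconst : (1 - 2⁻¹ : ℝ)⁻¹ = 2 := by norm_num
  simpa only [hconst] using blowup_point_selection_general (θ := 2⁻¹) (by norm_num) (by norm_num)
    (by norm_num) (hupos a ha).le hmax hx
end
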